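/- Let A be an AWA with state set Q and let w ∈ Σ^ω with unique sequence R_w = Q₁⁰Q₁¹⋯ (where Q₁ⁱ = Q_{w[i⋯]}). Then for every i ∈ ℕ: (L2) for every state q ∈ Q₁ⁱ, Q₁^{i+1} ⊨ δ(q, w[i]); and (L3) for every state q ∈ Q∖Q₁ⁱ, Q∖Q₁^{i+1} ⊨ δ̂(q, w[i]). Moreover, R_w is the unique sequence (Sⁱ)_{i∈ℕ} of subsets of Q such that for every i, every q ∈ Sⁱ satisfies w[i⋯] ∈ L(A^q) and every q ∈ Q∖Sⁱ satisfies w[i⋯] ∉ L(A^q). -/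

import Mathlib

/-!
Everything follows from the one-step characterization
`w ∈ L(A^q) ↔ Q_{w[1⋯]} ⊨ δ(q, w[0])` (`mem_lang_setInit_iff`). Its left-to-right direction is (L2),
and its right-to-left direction is, by De Morgan duality (`PosBool.sat_compl_dual`), exactly (L3).
Uniqueness of `R_w` is extensionality.

Left to right, the successors of the root of an accepting run DAG are each the root of an accepting
run DAG on the remaining word (`mem_QSet_of_edge`), and satisfaction is monotone.

Right to left, accepting run DAGs `G s` for the states `s ∈ Q_{w[1⋯]}` have to be glued below a new
root. Their plain union fails, because a branch could switch between the DAGs infinitely often.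
Instead the states are enumerated, and every vertex takes its outgoing edges from the `G s` of least
index in which it is reachable from the root. Along a branch this index never increases, so it is
eventually constant, and the branch has a tail inside the reachable part of a single accepting `G s`
(`exists_acc_of_minimal_owner`). Countability of the state set suffices for this argument.
-/

/-! ### Automata -/

universe u v

/-- Positive Boolean formulas over `Q` (with constants tt and ff, connectives ∧ and ∨). -/
inductive PosBool (Q : Type u) : Type u
  | tt : PosBool Q
  | ff : PosBool Q
  | var : Q → PosBool Q
  | band : PosBool Q → PosBool Q → PosBool Q
  | bor : PosBool Q → PosBool Q → PosBool Q

namespace PosBool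

variable {Q : Type u}

/-- A set `Y` satisfies a positive Boolean formula. -/
def Sat (Y : Set Q) : PosBool Q → Prop
  | .tt => True
  | .ff => False
  | .var q => q ∈ Y
  | .band θ₁ θ₂ => Sat Y θ₁ ∧ Sat Y θ₂
  | .bor θ₁ θ₂ => Sat Y θ₁ ∨ Sat Y θ₂

/-- The states occurring in a formula. -/
def vars : PosBool Q → Set Q
  | .tt => ∅
  | .ff => ∅
  | .var q => {q}
  | .band θ₁ θ₂ => vars θ₁ ∪ vars θ₂
  | .bor θ₁ θ₂ => vars θ₁ ∪ vars θ₂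

/-- The dual formula: exchange tt with ff and ∧ with ∨. -/
def dual : PosBool Q → PosBool Q
  | .tt => .ff
  | .ff => .tt
  | .var q => .var q
  | .band θ₁ θ₂ => .bor (dual θ₁) (dual θ₂)
  | .bor θ₁ θ₂ => .band (dual θ₁) (dual θ₂)

end PosBool

/-- An alternating Büchi automaton with alphabet `α` and state space `Q`. -/
structure ABA (α : Type v) (Q : Type u) where
  init : Q
  delta : Q → α → PosBool Q
  acc : Set Q

namespace ABA

variable {α : Type v} {Q : Type u}

/-- The automaton `A^q`, i.e. `A` with initial state `q`. -/
def setInit (M : ABA α Q) (q : Q) : ABA α Q := { M with init := q }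

/-- Completeness: every transition formula is satisfiable. -/
def Complete (M : ABA α Q) : Prop := ∀ q a, PosBool.Sat (Set.univ : Set Q) (M.delta q a)

/-- Edge of the underlying graph. -/
def edge (M : ABA α Q) (q q' : Q) : Prop := ∃ a, q' ∈ PosBool.vars (M.delta q a)

/-- Reachability in the underlying graph. -/
def reach (M : ABA α Q) : Q → Q → Prop := Relation.ReflTransGen M.edge

/-- The strongly connected component of a state. -/
def sccOf (M : ABA α Q) (q : Q) : Set Q := {q' | M.reach q q' ∧ M.reach q' q}

/-- `C` is an SCC of the underlying graph. -/
def IsSCC (M : ABA α Q) (C : Set Q) : Prop := ∃ q, C = M.sccOf q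

/-- A weak alternating automaton: every SCC is accepting or rejecting. -/
def IsWeak (M : ABA α Q) : Prop := ∀ q : Q, M.sccOf q ⊆ M.acc ∨ M.sccOf q ∩ M.acc = ∅

/-- The dual automaton. -/
def dual (M : ABA α Q) : ABA α Q where
  init := M.init
  delta := fun q a => (M.delta q a).dual
  acc := M.accᶜ

/-- A run DAG of `M` over the ω-word `w`. -/
structure RunDAG (M : ABA α Q) (w : ℕ → α) where
  V : ℕ → Set Q
  E : ℕ → Q → Q → Prop
  init_mem : M.init ∈ V 0
  edge_src : ∀ ℓ q q', E ℓ q q' → q ∈ V ℓ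
  edge_tgt : ∀ ℓ q q', E ℓ q q' → q' ∈ V (ℓ + 1)
  sat : ∀ ℓ q, q ∈ V ℓ → PosBool.Sat {q' | E ℓ q q'} (M.delta q (w ℓ))

/-- An ω-branch of a run DAG. -/
def RunDAG.IsBranch {M : ABA α Q} {w : ℕ → α} (G : M.RunDAG w) (b : ℕ → Q) : Prop :=
  b 0 = M.init ∧ ∀ ℓ, G.E ℓ (b ℓ) (b (ℓ + 1))

/-- A run DAG is accepting if every ω-branch visits accepting states infinitely often. -/
def RunDAG.Accepting {M : ABA α Q} {w : ℕ → α} (G : M.RunDAG w) : Prop :=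
  ∀ b, G.IsBranch b → ∀ n, ∃ m, n ≤ m ∧ b m ∈ M.acc

/-- `M` accepts `w` if there is an accepting run DAG of `M` over `w`. -/
def Accepts (M : ABA α Q) (w : ℕ → α) : Prop := ∃ G : M.RunDAG w, G.Accepting

/-- The language of `M`. -/
def lang (M : ABA α Q) : Set (ℕ → α) := {w | M.Accepts w}

/-- `R`: the union of the rejecting SCCs. -/
def RejPart (M : ABA α Q) : Set Q := {q | M.sccOf q ∩ M.acc = ∅}

/-- `Acc`: the union of the accepting SCCs. -/
def AccPart (M : ABA α Q) : Set Q := {q | M.sccOf q ⊆ M.acc}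

end ABA

/-- The suffix `w[i⋯]` of an ω-word. -/
def suffix {α : Type v} (w : ℕ → α) (i : ℕ) : ℕ → α := fun n => w (i + n)

/-- `Q_w = {s ∈ Q | w ∈ L(A^s)}`. -/
def QSet {α : Type v} {Q : Type u} (M : ABA α Q) (w : ℕ → α) : Set Q :=
  {s | w ∈ (M.setInit s).lang}

/-- The unique sequence `R_w`, i.e. `i ↦ Q_{w[i⋯]}`. -/
def QSeq {α : Type v} {Q : Type u} (M : ABA α Q) (w : ℕ → α) (i : ℕ) : Set Q :=
  QSet M (suffix w i)

/-- A nondeterministic Büchi automaton. -/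
structure NBA (α : Type v) (P : Type u) where
  init : Set P
  delta : P → α → Set P
  acc : Set P

namespace NBA

variable {α : Type v} {P : Type u}

/-- A macrorun of `N` over `w`. -/
def IsMacrorun (N : NBA α P) (w : ℕ → α) (ρ : ℕ → P) : Prop :=
  ρ 0 ∈ N.init ∧ ∀ i, ρ (i + 1) ∈ N.delta (ρ i) (w i)

/-- An accepting macrorun of `N` over `w`. -/
def IsAccMacrorun (N : NBA α P) (w : ℕ → α) (ρ : ℕ → P) : Prop :=
  N.IsMacrorun w ρ ∧ ∀ n, ∃ m, n ≤ m ∧ ρ m ∈ N.acc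

/-- The language of an NBA. -/
def lang (N : NBA α P) : Set (ℕ → α) := {w | ∃ ρ, N.IsAccMacrorun w ρ}

/-- `N^m`: the NBA `N` with set of initial states `{m}`. -/
def fromState (N : NBA α P) (p : P) : NBA α P := { N with init := {p} }

/-- An NBA is unambiguous if it has at most one accepting macrorun over every word. -/
def Unambiguous (N : NBA α P) : Prop :=
  ∀ w ρ₁ ρ₂, N.IsAccMacrorun w ρ₁ → N.IsAccMacrorun w ρ₂ → ρ₁ = ρ₂

end NBA

/-- Macrostates of the Bustan–Rubin–Vardi construction: tuples `(Q₁, Q₂, Q₃, Q₄)`. -/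
abbrev BRVState (Q : Type u) := Set Q × Set Q × Set Q × Set Q

/-- Consistency of a BRV tuple: `Q₂ = Q∖Q₁`, `Q₃ ⊆ Q₁∖F`, `Q₄ ⊆ Q₂∖F̂`. -/
def BRVConsistent {α : Type v} {Q : Type u} (M : ABA α Q) (m : BRVState Q) : Prop :=
  m.2.1 = m.1ᶜ ∧ m.2.2.1 ⊆ m.1 \ M.acc ∧ m.2.2.2 ⊆ m.2.1 \ M.dual.acc

/-- The Bustan–Rubin–Vardi NBA `B` constructed from an AWA. -/
def BRV {α : Type v} {Q : Type u} (M : ABA α Q) : NBA α (BRVState Q) where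
  init := {m | BRVConsistent M m ∧ M.init ∈ m.1}
  delta := fun m σ =>
    {m' | BRVConsistent M m ∧ BRVConsistent M m' ∧
      (∀ s ∈ m.1, PosBool.Sat m'.1 (M.delta s σ)) ∧
      (∀ s ∈ m.2.1, PosBool.Sat m'.2.1 (M.dual.delta s σ)) ∧
      ((m.2.2.1 = ∅ ∧ m.2.2.2 = ∅ ∧ m'.2.2.1 = m'.1 \ M.acc ∧ m'.2.2.2 = m'.2.1 \ M.dual.acc) ∨
       ((m.2.2.1 ≠ ∅ ∨ m.2.2.2 ≠ ∅) ∧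
        (∃ Y₃ ⊆ m'.1, (∀ s ∈ m.2.2.1, PosBool.Sat Y₃ (M.delta s σ)) ∧ m'.2.2.1 = Y₃ \ M.acc) ∧
        (∃ Y₄ ⊆ m'.2.1, (∀ s ∈ m.2.2.2, PosBool.Sat Y₄ (M.dual.delta s σ)) ∧
          m'.2.2.2 = Y₄ \ M.dual.acc)))}
  acc := {m | BRVConsistent M m ∧ m.2.2.1 = ∅ ∧ m.2.2.2 = ∅}

/-- The domain of the distance function at level `i`: `(Q₁ⁱ ∩ R) ∪ (Acc ∖ Q₁ⁱ)`. -/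
def DistDom {α : Type v} {Q : Type u} (M : ABA α Q) (QS : ℕ → Set Q) (i : ℕ) : Set Q :=
  (QS i ∩ M.RejPart) ∪ (M.AccPart \ QS i)

/-- Consistency of a sequence of distance functions (Rules R1 and R2). -/
def ConsistentDist {α : Type v} {Q : Type u} (M : ABA α Q) (w : ℕ → α)
    (QS : ℕ → Set Q) (d : ℕ → Q → ℕ) : Prop :=
  ∀ i : ℕ,
    (∀ p ∈ M.RejPart ∩ QS i,
      PosBool.Sat ((QS (i + 1) \ M.sccOf p) ∪
        {q | q ∈ M.sccOf p ∩ QS (i + 1) ∧ d (i + 1) q ≤ d i p - 1}) (M.delta p (w i)) ∧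
      (1 < d i p →
        ¬ PosBool.Sat ((QS (i + 1) \ M.sccOf p) ∪
          {q | q ∈ M.sccOf p ∩ QS (i + 1) ∧ d (i + 1) q ≤ d i p - 2}) (M.delta p (w i)))) ∧
    (∀ p ∈ M.AccPart \ QS i,
      PosBool.Sat ((QS (i + 1) ∪ M.sccOf p)ᶜ ∪
        {q | q ∈ M.sccOf p \ QS (i + 1) ∧ d (i + 1) q ≤ d i p - 1}) (M.dual.delta p (w i)) ∧
      (1 < d i p →
        ¬ PosBool.Sat ((QS (i + 1) ∪ M.sccOf p)ᶜ ∪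
          {q | q ∈ M.sccOf p \ QS (i + 1) ∧ d (i + 1) q ≤ d i p - 2}) (M.dual.delta p (w i))))

/-- Strict part of a preorder. -/
def StrictOf {Q : Type u} (le : Q → Q → Prop) (p q : Q) : Prop := le p q ∧ ¬ le q p

/-- `le` is a total preorder on `D` (as a relation over `D × D`). -/
def IsTotalPreorderOn {Q : Type u} (D : Set Q) (le : Q → Q → Prop) : Prop :=
  (∀ p q, le p q → p ∈ D ∧ q ∈ D) ∧ (∀ p ∈ D, le p p) ∧
  (∀ p q r, le p q → le q r → le p r) ∧ (∀ p ∈ D, ∀ q ∈ D, le p q ∨ le q p)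

/-- `D` is downwards closed w.r.t. `le` inside the domain `Dom`. -/
def DownClosed {Q : Type u} (le : Q → Q → Prop) (Dom D : Set Q) : Prop :=
  D ⊆ Dom ∧ ∀ q ∈ D, ∀ q', le q' q → q' ∈ D

/-- The set of maximal elements of a preorder on the domain `Dom`. -/
def MaxSet {Q : Type u} (le : Q → Q → Prop) (Dom : Set Q) : Set Q :=
  {q | q ∈ Dom ∧ ∀ q' ∈ Dom, ¬ StrictOf le q q'}

/-- Rule R1' for a rejecting SCC `C`, letter `σ`, sets `Q₁, Q₁'` and preorders `le, le'`. -/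
def RuleR1 {α : Type v} {Q : Type u} (M : ABA α Q) (C : Set Q) (σ : α)
    (Q1 Q1' : Set Q) (le le' : Q → Q → Prop) : Prop :=
  ∀ q ∈ C ∩ Q1, ∀ q' ∈ C ∩ Q1,
    (StrictOf le q q' ↔ ∃ r ∈ C ∩ Q1',
      PosBool.Sat ({r' | r' ∈ C ∩ Q1' ∧ StrictOf le' r' r} ∪ (Q1' \ C)) (M.delta q σ) ∧
      ¬ PosBool.Sat ({r' | r' ∈ C ∩ Q1' ∧ StrictOf le' r' r} ∪ (Q1' \ C)) (M.delta q' σ))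

/-- Rule R2' for an accepting SCC `C`, letter `σ`, sets `Q₁, Q₁'` and preorders `le, le'`. -/
def RuleR2 {α : Type v} {Q : Type u} (M : ABA α Q) (C : Set Q) (σ : α)
    (Q1 Q1' : Set Q) (le le' : Q → Q → Prop) : Prop :=
  ∀ q ∈ C \ Q1, ∀ q' ∈ C \ Q1,
    (StrictOf le q q' ↔ ∃ r ∈ C \ Q1',
      PosBool.Sat ({r' | r' ∈ C \ Q1' ∧ StrictOf le' r' r} ∪ (Q1' ∪ C)ᶜ) (M.dual.delta q σ) ∧
      ¬ PosBool.Sat ({r' | r' ∈ C \ Q1' ∧ StrictOf le' r' r} ∪ (Q1' ∪ C)ᶜ) (M.dual.delta q' σ))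

/-- Consistency of a sequence of families of total preorders (Rules R1' and R2'). -/
def ConsistentPre {α : Type v} {Q : Type u} (M : ABA α Q) (w : ℕ → α)
    (QS : ℕ → Set Q) (pre : ℕ → Set Q → Q → Q → Prop) : Prop :=
  ∀ i C, M.IsSCC C →
    (C ⊆ M.RejPart →
      IsTotalPreorderOn (C ∩ QS i) (pre i C) ∧
      RuleR1 M C (w i) (QS i) (QS (i + 1)) (pre i C) (pre (i + 1) C)) ∧
    (C ⊆ M.AccPart →
      IsTotalPreorderOn (C \ QS i) (pre i C) ∧
      RuleR2 M C (w i) (QS i) (QS (i + 1)) (pre i C) (pre (i + 1) C))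

/-- Macrostates of the `B_u` construction: `(Q₁, Q₂, {⪯_C}_{C∈S}, S, D)`. -/
abbrev BuState (Q : Type u) := Set Q × Set Q × (Set Q → Q → Q → Prop) × Set Q × Set Q

def BuState.q1 {Q : Type u} (m : BuState Q) : Set Q := m.1
def BuState.q2 {Q : Type u} (m : BuState Q) : Set Q := m.2.1
def BuState.pre {Q : Type u} (m : BuState Q) : Set Q → Q → Q → Prop := m.2.2.1
def BuState.sS {Q : Type u} (m : BuState Q) : Set Q := m.2.2.2.1
def BuState.dD {Q : Type u} (m : BuState Q) : Set Q := m.2.2.2.2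

/-- Well-formedness of a `B_u` macrostate. -/
def BuWF {α : Type v} {Q : Type u} (M : ABA α Q) (m : BuState Q) : Prop :=
  m.q2 = m.q1ᶜ ∧
  (∀ C, M.IsSCC C →
    (C ⊆ M.RejPart → IsTotalPreorderOn (m.q1 ∩ C) (m.pre C)) ∧
    (C ⊆ M.AccPart → IsTotalPreorderOn (m.q2 ∩ C) (m.pre C))) ∧
  (∀ C, ¬ M.IsSCC C → m.pre C = fun _ _ => False) ∧
  M.IsSCC m.sS ∧
  (m.sS ⊆ M.RejPart → DownClosed (m.pre m.sS) (m.q1 ∩ m.sS) m.dD) ∧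
  (m.sS ⊆ M.AccPart → DownClosed (m.pre m.sS) (m.q2 ∩ m.sS) m.dD)

/-- The NBA `B_u` constructed from an AWA `M`, a round-robin successor `next` on SCCs
and an initial SCC `C₀`. -/
def Bu {α : Type v} {Q : Type u} (M : ABA α Q) (next : Set Q → Set Q) (C0 : Set Q) :
    NBA α (BuState Q) where
  init := {m | BuWF M m ∧ M.init ∈ m.q1 ∧ m.sS = C0 ∧ m.dD = ∅}
  delta := fun m σ =>
    {m' | BuWF M m ∧ BuWF M m' ∧
      (∀ s ∈ m.q1, PosBool.Sat m'.q1 (M.delta s σ)) ∧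
      (∀ s ∈ m.q2, PosBool.Sat m'.q2 (M.dual.delta s σ)) ∧
      (∀ C, M.IsSCC C →
        (C ⊆ M.RejPart → RuleR1 M C σ m.q1 m'.q1 (m.pre C) (m'.pre C)) ∧
        (C ⊆ M.AccPart → RuleR2 M C σ m.q1 m'.q1 (m.pre C) (m'.pre C))) ∧
      (m.dD = ∅ → m'.sS = next m.sS ∧
        (m'.sS ⊆ M.RejPart → m'.dD = m'.q1 ∩ m'.sS) ∧
        (m'.sS ⊆ M.AccPart → m'.dD = m'.q2 ∩ m'.sS)) ∧
      (m.dD ≠ ∅ → m'.sS = m.sS ∧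
        (m.sS ⊆ M.RejPart →
          (∀ s ∈ m.dD, PosBool.Sat (m'.dD ∪ (m'.q1 \ m.sS)) (M.delta s σ)) ∧
          (∀ D'', DownClosed (m'.pre m.sS) (m'.q1 ∩ m.sS) D'' →
            (∀ s ∈ m.dD, PosBool.Sat (D'' ∪ (m'.q1 \ m.sS)) (M.delta s σ)) → m'.dD ⊆ D'')) ∧
        (m.sS ⊆ M.AccPart →
          (∀ s ∈ m.dD, PosBool.Sat (m'.dD ∪ (m'.q2 \ m.sS)) (M.dual.delta s σ)) ∧
          (∀ D'', DownClosed (m'.pre m.sS) (m'.q2 ∩ m.sS) D'' →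
            (∀ s ∈ m.dD, PosBool.Sat (D'' ∪ (m'.q2 \ m.sS)) (M.dual.delta s σ)) → m'.dD ⊆ D'')))}
  acc := {m | BuWF M m ∧ m.dD = ∅}

/-- Macrostates of the `U` construction: `(Q₁, Q₂, ⪯_C, C, D)`. -/
abbrev UState (Q : Type u) := Set Q × Set Q × (Q → Q → Prop) × Set Q × Set Q

def UState.q1 {Q : Type u} (m : UState Q) : Set Q := m.1
def UState.q2 {Q : Type u} (m : UState Q) : Set Q := m.2.1
def UState.pre {Q : Type u} (m : UState Q) : Q → Q → Prop := m.2.2.1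
def UState.cC {Q : Type u} (m : UState Q) : Set Q := m.2.2.2.1
def UState.dD {Q : Type u} (m : UState Q) : Set Q := m.2.2.2.2

/-- Well-formedness of a `U` macrostate. -/
def UWF {α : Type v} {Q : Type u} (M : ABA α Q) (m : UState Q) : Prop :=
  m.q2 = m.q1ᶜ ∧ M.IsSCC m.cC ∧
  (m.cC ⊆ M.RejPart →
    IsTotalPreorderOn (m.q1 ∩ m.cC) m.pre ∧
    (m.dD = m.q1 ∩ m.cC ∨ m.dD = (m.q1 ∩ m.cC) \ MaxSet m.pre (m.q1 ∩ m.cC))) ∧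
  (m.cC ⊆ M.AccPart →
    IsTotalPreorderOn (m.q2 ∩ m.cC) m.pre ∧
    (m.dD = m.q2 ∩ m.cC ∨ m.dD = (m.q2 ∩ m.cC) \ MaxSet m.pre (m.q2 ∩ m.cC)))

/-- The NBA `U` constructed from an AWA `M`, a round-robin successor `next` on SCCs
and an initial SCC `C₀`. -/
def Uaut {α : Type v} {Q : Type u} (M : ABA α Q) (next : Set Q → Set Q) (C0 : Set Q) :
    NBA α (UState Q) where
  init := {m | UWF M m ∧ M.init ∈ m.q1 ∧ m.cC = C0 ∧ m.dD = ∅}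
  delta := fun m σ =>
    {m' | UWF M m ∧ UWF M m' ∧
      (∀ s ∈ m.q1, PosBool.Sat m'.q1 (M.delta s σ)) ∧
      (∀ s ∈ m.q2, PosBool.Sat m'.q2 (M.dual.delta s σ)) ∧
      (m.dD = ∅ → m'.cC = next m.cC ∧
        (m'.cC ⊆ M.RejPart → m'.dD = m'.q1 ∩ m'.cC) ∧
        (m'.cC ⊆ M.AccPart → m'.dD = m'.q2 ∩ m'.cC)) ∧
      (m.dD ≠ ∅ → m'.cC = m.cC ∧
        (m.cC ⊆ M.RejPart →
          RuleR1 M m.cC σ m.q1 m'.q1 m.pre m'.pre ∧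
          DownClosed m'.pre (m'.q1 ∩ m.cC) m'.dD ∧
          (∀ s ∈ m.dD, PosBool.Sat (m'.dD ∪ (m'.q1 \ m.cC)) (M.delta s σ)) ∧
          (∀ D'', DownClosed m'.pre (m'.q1 ∩ m.cC) D'' →
            (∀ s ∈ m.dD, PosBool.Sat (D'' ∪ (m'.q1 \ m.cC)) (M.delta s σ)) → m'.dD ⊆ D'')) ∧
        (m.cC ⊆ M.AccPart →
          RuleR2 M m.cC σ m.q1 m'.q1 m.pre m'.pre ∧
          DownClosed m'.pre (m'.q2 ∩ m.cC) m'.dD ∧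
          (∀ s ∈ m.dD, PosBool.Sat (m'.dD ∪ (m'.q2 \ m.cC)) (M.dual.delta s σ)) ∧
          (∀ D'', DownClosed m'.pre (m'.q2 ∩ m.cC) D'' →
            (∀ s ∈ m.dD, PosBool.Sat (D'' ∪ (m'.q2 \ m.cC)) (M.dual.delta s σ)) → m'.dD ⊆ D'')))}
  acc := {m | UWF M m ∧ m.dD = ∅}

/-- `tpo n`: the number of total preorders on an `n`-element set. -/
noncomputable def tpo (n : ℕ) : ℕ :=
  Nat.card {r : Fin n → Fin n → Prop // Reflexive r ∧ Transitive r ∧ ∀ a b, r a b ∨ r b a}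

/-! ### Monotonicity and duality of satisfaction -/

namespace PosBool

variable {Q : Type*}

theorem Sat.mono {Y Z : Set Q} (h : Y ⊆ Z) : ∀ {θ : PosBool Q}, Sat Y θ → Sat Z θ
  | .tt, _ => trivial
  | .var _, hq => h hq
  | .band _ _, hq => ⟨hq.1.mono h, hq.2.mono h⟩
  | .bor _ _, hq => hq.imp (fun k => k.mono h) (fun k => k.mono h)

theorem sat_compl_dual (Y : Set Q) (θ : PosBool Q) : Sat Yᶜ θ.dual ↔ ¬ Sat Y θ := by
  induction θ with
  | tt => simp [dual, Sat]
  | ff => simp [dual, Sat]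
  | var q => simp [dual, Sat]
  | band a b ha hb => simp only [dual, Sat, ha, hb]; tauto
  | bor a b ha hb => simp only [dual, Sat, ha, hb]; tauto

end PosBool

/-! ### Reachable vertices of a run DAG -/

namespace ABA

variable {α Q : Type*} {M : ABA α Q} {w : ℕ → α}

/-- `G.Reach ℓ p`: the vertex `(p, ℓ)` is reachable from the root of the run DAG `G`. -/
def RunDAG.Reach (G : M.RunDAG w) : ℕ → Q → Prop
  | 0, p => p = M.init
  | ℓ + 1, p => ∃ q, G.Reach ℓ q ∧ G.E ℓ q p

theorem RunDAG.Reach.mem {G : M.RunDAG w} : ∀ {ℓ : ℕ} {p : Q}, G.Reach ℓ p → p ∈ G.V ℓ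
  | 0, _, h => by
    cases h
    exact G.init_mem
  | _ + 1, _, ⟨_, _, h⟩ => G.edge_tgt _ _ _ h

/-- Acceptance passes from branches to all infinite paths that start at a reachable vertex: such a
path is a tail of some branch. Only the values `c n` with `ℓ ≤ n` matter. -/
theorem RunDAG.Accepting.of_reach {G : M.RunDAG w} (hG : G.Accepting) (ℓ : ℕ) :
    ∀ c : ℕ → Q, G.Reach ℓ (c ℓ) → (∀ n, ℓ ≤ n → G.E n (c n) (c (n + 1))) →
      ∀ n, ∃ m, n ≤ m ∧ c m ∈ M.acc := by
  induction ℓ with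
  | zero => exact fun c h0 hc => hG c ⟨h0, fun n => hc n (Nat.zero_le n)⟩
  | succ ℓ ih =>
    rintro c ⟨q, hq, hE⟩ hc n
    -- Prolong the path backwards by one edge, overwriting the irrelevant value `c ℓ`.
    obtain ⟨m, hm, hacc⟩ := ih (Function.update c ℓ q) (by simpa using hq) (by
      intro k hk
      rcases hk.eq_or_lt with rfl | hk
      · simpa using hE
      · rw [Function.update_of_ne (by omega), Function.update_of_ne (by omega)]
        exact hc k hk) (max n (ℓ + 1))
    rw [Function.update_of_ne (by omega)] at hacc
    exact ⟨m, by omega, hacc⟩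

/-- A successor of the root of an accepting run DAG is a state accepting the remaining word. -/
theorem mem_QSet_of_edge {G : M.RunDAG w} (hG : G.Accepting) {q : Q} (hq : G.E 0 M.init q) :
    q ∈ QSet M (fun n => w (n + 1)) := by
  refine ⟨{ V := fun ℓ => G.V (ℓ + 1)
            E := fun ℓ => G.E (ℓ + 1)
            init_mem := G.edge_tgt _ _ _ hq
            edge_src := fun ℓ => G.edge_src (ℓ + 1)
            edge_tgt := fun ℓ => G.edge_tgt (ℓ + 1)
            sat := fun ℓ => G.sat (ℓ + 1) }, ?_⟩
  rintro b ⟨hb0, hb⟩ n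
  have hb0 : b 0 = q := hb0
  obtain ⟨m, hm, hacc⟩ := hG.of_reach 1 (fun n => b (n - 1))
    ⟨M.init, rfl, by simpa [hb0] using hq⟩ (by
      intro k hk
      obtain ⟨k, rfl⟩ := Nat.exists_eq_add_of_le' hk
      exact hb k) (n + 1)
  exact ⟨m - 1, by omega, hacc⟩

/-! ### Gluing accepting run DAGs -/

/-- `Owner G e ℓ p s`: among the DAGs `G t` in which the vertex `(p, ℓ)` is reachable, `G s` is one
of least index `e s`. -/
def Owner {U : Set Q} (G : ∀ s : U, (M.setInit s).RunDAG w) (e : U → ℕ) (ℓ : ℕ) (p : Q) (s : U) :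
    Prop :=
  (G s).Reach ℓ p ∧ ∀ t, (G t).Reach ℓ p → e s ≤ e t

theorem exists_owner {U : Set Q} (G : ∀ s : U, (M.setInit s).RunDAG w) (e : U → ℕ) {ℓ : ℕ} {p : Q}
    {s : U} (h : (G s).Reach ℓ p) : ∃ t, Owner G e ℓ p t := by
  obtain ⟨t, ht, hmin⟩ :=
    (measure e).wf.has_min {t | (G t).Reach ℓ p} ⟨s, h⟩
  exact ⟨t, ht, fun u hu => not_lt.1 (hmin u hu)⟩

/-- A path that always follows an edge of the owner of its current vertex visits accepting states
infinitely often, since the index of the owner is eventually constant. -/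
theorem exists_acc_of_minimal_owner {U : Set Q} {G : ∀ s : U, (M.setInit s).RunDAG w}
    (hG : ∀ s, (G s).Accepting) {e : U → ℕ} (he : Function.Injective e) {c : ℕ → Q}
    (hc : ∀ n, ∃ s, Owner G e n (c n) s ∧ (G s).E n (c n) (c (n + 1))) (n : ℕ) :
    ∃ m, n ≤ m ∧ c m ∈ M.acc := by
  choose s hs hE using hc
  have hanti : Antitone fun n => e (s n) :=
    antitone_nat_of_succ_le fun n => (hs (n + 1)).2 _ ⟨c n, (hs n).1, hE n⟩
  obtain ⟨N, -, hN⟩ := (measure fun n => e (s n)).wf.has_min Set.univ ⟨0, trivial⟩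
  have hconst : ∀ k, N ≤ k → s k = s N := fun k hk =>
    he (le_antisymm (hanti hk) (not_lt.1 (hN k trivial)))
  exact (hG (s N)).of_reach N c (hs N).1 (fun k hk => hconst k hk ▸ hE k) n

/-- If the transition formula of `q` is satisfied by the states accepting the remaining word, then
`q` accepts the word: glue a new root onto the given DAGs, each vertex following its owner. -/
theorem mem_lang_setInit_of_sat [Countable Q] {q : Q}
    (h : PosBool.Sat (QSet M (fun n => w (n + 1))) (M.delta q (w 0))) :
    w ∈ (M.setInit q).lang := by
  have hU : ∀ s : QSet M (fun n => w (n + 1)),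
      ∃ G : (M.setInit s).RunDAG (fun n => w (n + 1)), G.Accepting := fun s => s.2
  choose G hG using hU
  obtain ⟨e, he⟩ := exists_injective_nat (QSet M (fun n => w (n + 1)))
  refine ⟨{ V := fun
              | 0 => {q}
              | ℓ + 1 => {p | ∃ s, (G s).Reach ℓ p}
            E := fun
              | 0 => fun a b => a = q ∧ b ∈ QSet M (fun n => w (n + 1))
              | ℓ + 1 => fun a b => ∃ s, Owner G e ℓ a s ∧ (G s).E ℓ a b
            init_mem := rfl
            edge_src := ?_
            edge_tgt := ?_
            sat := ?_ }, ?_⟩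
  · rintro (_ | ℓ) a b hab
    · exact hab.1
    · obtain ⟨s, hs, -⟩ := hab
      exact ⟨s, hs.1⟩
  · rintro (_ | ℓ) a b hab
    · exact ⟨⟨b, hab.2⟩, rfl⟩
    · obtain ⟨s, hs, hE⟩ := hab
      exact ⟨s, a, hs.1, hE⟩
  · rintro (_ | ℓ) a ha
    · cases ha
      refine h.mono fun b hb => ?_
      exact ⟨rfl, hb⟩
    · obtain ⟨s, hs⟩ := ha
      obtain ⟨t, ht⟩ := exists_owner G e hs
      refine ((G t).sat ℓ a ht.1.mem).mono fun b hb => ?_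
      exact ⟨t, ht, hb⟩
  · rintro b ⟨-, hb⟩ n
    obtain ⟨m, hm, hacc⟩ :=
      exists_acc_of_minimal_owner hG he (c := fun k => b (k + 1)) (fun k => hb (k + 1)) n
    exact ⟨m + 1, by omega, hacc⟩

/-! ### One-step characterization of the accepting states -/

theorem mem_lang_setInit_iff [Countable Q] (M : ABA α Q) (w : ℕ → α) (q : Q) :
    w ∈ (M.setInit q).lang ↔ PosBool.Sat (QSet M (fun n => w (n + 1))) (M.delta q (w 0)) := by
  refine ⟨?_, mem_lang_setInit_of_sat⟩
  rintro ⟨G, hG⟩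
  exact (G.sat 0 q G.init_mem).mono fun q' hq' => mem_QSet_of_edge hG hq'

end ABA

theorem mem_QSeq_iff {α Q : Type*} [Countable Q] (M : ABA α Q) (w : ℕ → α) (i : ℕ) (q : Q) :
    q ∈ QSeq M w i ↔ PosBool.Sat (QSeq M w (i + 1)) (M.delta q (w i)) := by
  have hsuf : (fun n => suffix w i (n + 1)) = suffix w (i + 1) := by
    funext n
    exact congrArg w (by omega)
  have h := ABA.mem_lang_setInit_iff M (suffix w i) q
  rw [hsuf] at h
  exact h

/-- local consistency (L2, L3) of the unique sequence `R_w`, and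
uniqueness of `R_w` w.r.t. properties P2 and P3. -/
theorem qseq_local_consistency_and_unique {α Q : Type} [Fintype α] [Fintype Q]
    (M : ABA α Q) (hweak : M.IsWeak) (hcomp : M.Complete) (w : ℕ → α) :
    (∀ i : ℕ,
      (∀ q ∈ QSeq M w i, PosBool.Sat (QSeq M w (i + 1)) (M.delta q (w i))) ∧
      (∀ q ∉ QSeq M w i, PosBool.Sat ((QSeq M w (i + 1))ᶜ) (M.dual.delta q (w i)))) ∧
    (∀ S : ℕ → Set Q,
      (∀ i : ℕ, (∀ q ∈ S i, suffix w i ∈ (M.setInit q).lang) ∧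
        (∀ q ∉ S i, suffix w i ∉ (M.setInit q).lang)) →
      S = QSeq M w) := by
  refine ⟨fun i => ⟨fun q hq => (mem_QSeq_iff M w i q).1 hq, fun q hq => ?_⟩, fun S hS => ?_⟩
  · exact (PosBool.sat_compl_dual _ _).2 fun h => hq ((mem_QSeq_iff M w i q).2 h)
  · ext i q
    exact ⟨(hS i).1 q, fun h => by_contra fun hq => (hS i).2 q hq h⟩
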